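/- arXiv:2207.00707 — 12 statements merged into one kernel-verified Lean document; each statement's English description precedes it below -/
import Mathlib

section
/- There exists a unique real number x such that cos x = x, and this unique fixed point lies in the open interval (0, 1). -/
open Function Set

lemma subsingleton_inter_fixedPoints_of_antitoneOn {α : Type*} [LinearOrder α] {f : α → α}
    {s : Set α} (hf : AntitoneOn f s) : (s ∩ fixedPoints f).Subsingleton := by
  rintro x ⟨hxs, hx⟩ y ⟨hys, hy⟩
  wlog hxy : x ≤ y generalizing x y
  · exact (this hys hy hxs hx (le_of_not_ge hxy)).symm
  have hyx : y ≤ x := calc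
    y = f y := hy.symm
    _ ≤ f x := hf hxs hys hxy
    _ = x := hx
  exact le_antisymm hxy hyx

lemma mem_Ioo_of_cos_eq_self {x : ℝ} (hx : Real.cos x = x) : x ∈ Ioo (0 : ℝ) 1 := by
  have habs : |x| ≤ 1 := by simpa only [hx] using Real.abs_cos_le_one x
  have hpos : 0 < x := by simpa only [hx] using Real.cos_pos_of_le_one habs
  have hlt : x < 1 := calc
    x = Real.cos x := hx.symm
    _ < Real.cos 0 :=
      Real.cos_lt_cos_of_nonneg_of_le_pi le_rfl
        (by linarith [le_of_abs_le habs, Real.pi_gt_three]) hpos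
    _ = 1 := Real.cos_zero
  exact ⟨hpos, hlt⟩

/-- There exists a unique real number `x` such that `cos x = x`, and this unique
fixed point (the Dottie number) lies in the open interval `(0, 1)`. -/
theorem dottie_exists_unique_and_mem_Ioo :
    (∃! x : ℝ, Real.cos x = x) ∧
    ∀ x : ℝ, Real.cos x = x → x ∈ Set.Ioo (0 : ℝ) 1 := by
  refine ⟨existsUnique_of_exists_of_unique ?_ fun x y hx hy => ?_,
    fun _ => mem_Ioo_of_cos_eq_self⟩
  · obtain ⟨x, -, hx⟩ := exists_mem_Icc_isFixedPt Real.continuous_cos.continuousOn zero_le_one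
      (Real.cos_zero ▸ zero_le_one) (Real.cos_le_one 1)
    exact ⟨x, hx⟩
  · have hanti : AntitoneOn Real.cos (Ioo 0 1) :=
      Real.strictAntiOn_cos.antitoneOn.mono fun z hz =>
        ⟨hz.1.le, by linarith [hz.2, Real.pi_gt_three]⟩
    exact subsingleton_inter_fixedPoints_of_antitoneOn hanti
      ⟨mem_Ioo_of_cos_eq_self hx, hx⟩ ⟨mem_Ioo_of_cos_eq_self hy, hy⟩
end

section
/- Let d be the unique real number with cos d = d. Then for every real starting value x₀, the sequence of iterates n ↦ cos^[n] x₀ (the n-fold composition of cos applied to x₀) converges to d. -/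
/-!
The cosine maps `ℝ` into `[-1, 1]`, where its derivative is bounded by `sin 1 < 1`.  It is therefore
a contraction of `[-1, 1]`, and after one step every orbit obeys Banach's fixed point theorem.
-/

open Set

lemma abs_sin_le_sin_of_abs_le {x r : ℝ} (hx : |x| ≤ r) (hr : r ≤ Real.pi / 2) :
    |Real.sin x| ≤ Real.sin r := by
  have hr_pi : r ≤ Real.pi := hr.trans (half_le_self Real.pi_pos.le)
  rw [Real.abs_sin_eq_sin_abs_of_abs_le_pi (hx.trans hr_pi)]
  exact Real.sin_le_sin_of_le_of_le_pi_div_two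
    ((neg_nonpos.2 Real.pi_div_two_pos.le).trans (abs_nonneg x)) hr hx

lemma lipschitzOnWith_cos_Icc {r : ℝ} (hr : r ≤ Real.pi / 2) :
    LipschitzOnWith (Real.sin r).toNNReal Real.cos (Icc (-r) r) := by
  refine (convex_Icc (-r) r).lipschitzOnWith_of_nnnorm_deriv_le
    (fun _ _ ↦ Real.differentiableAt_cos) fun x hx ↦ ?_
  have hderiv : ‖deriv Real.cos x‖ ≤ Real.sin r := by
    simpa using abs_sin_le_sin_of_abs_le (abs_le.2 hx) hr
  exact NNReal.le_toNNReal_of_coe_le hderiv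

lemma contractingWith_cos_restrict_Icc :
    ContractingWith (Real.sin 1).toNNReal
      ((Real.mapsTo_cos (Icc (-1) 1)).restrict Real.cos (Icc (-1) 1) (Icc (-1) 1)) :=
  ⟨Real.toNNReal_lt_one.2 (Real.sin_lt one_pos),
    (lipschitzOnWith_cos_Icc Real.one_le_pi_div_two).mapsToRestrict (Real.mapsTo_cos _)⟩

/-- Let `d` be the unique real number with `cos d = d`.  Then for every real
starting value `x₀`, the sequence of iterates `n ↦ cos^[n] x₀` converges to `d`. -/
theorem cos_iterates_tendsto_dottie (d : ℝ) (hd : Real.cos d = d)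
    (huniq : ∀ y : ℝ, Real.cos y = y → y = d) (x₀ : ℝ) :
    Filter.Tendsto (fun n : ℕ => Real.cos^[n] x₀) Filter.atTop (nhds d) := by
  obtain ⟨y, -, hy_fixed, hy_lim, -⟩ := contractingWith_cos_restrict_Icc.exists_fixedPoint'
    isClosed_Icc.isComplete (Real.mapsTo_cos _) (Real.cos_mem_Icc x₀) (edist_ne_top _ _)
  have hy_eq : y = d := huniq y hy_fixed
  rw [← Filter.tendsto_add_atTop_iff_nat 1]
  simpa only [Function.iterate_succ_apply, hy_eq] using hy_lim
end

section
/- There exists a unique a in the open interval (π/2, π) such that a · sin a + cos a = 0 (i.e., a is the least positive critical point of the spherical Bessel function y₀(x) = -cos x / x); the function x ↦ -cos x / x is strictly monotone increasing on the interval (0, a]; there is a unique x in (0, a) with -cos x / x = -1; and this unique x satisfies cos x = x, i.e., it is the Dottie number. -/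
open Real Set

/-!
The derivative of `y₀(x) = -cos x / x` is `(x sin x + cos x) / x²`. Its numerator is positive on
`(0, π/2]` and has derivative `x cos x < 0` on `(π/2, 3π/2)`, so it decreases from `π/2` at `π/2`
to `-1` at `π`; it therefore vanishes exactly once in between, at `a`, and `y₀` is strictly
increasing on `(0, a]`. Away from `0`, the equation `y₀(x) = -1` is `cos x = x`. A fixed point of
`cos` lies in `[-1, 1]`, hence in `(0, 1] ⊆ (0, a)` because `cos` is positive on `[-1, 1]`, and it
is unique because `cos` decreases there.
-/

theorem hasDerivAt_mul_sin_add_cos (x : ℝ) :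
    HasDerivAt (fun x : ℝ => x * sin x + cos x) (x * cos x) x :=
  (((hasDerivAt_id' x).mul (hasDerivAt_sin x)).add (hasDerivAt_cos x)).congr_deriv (by ring)

theorem hasDerivAt_neg_cos_div {x : ℝ} (hx : x ≠ 0) :
    HasDerivAt (fun x : ℝ => -cos x / x) ((x * sin x + cos x) / x ^ 2) x :=
  ((hasDerivAt_cos x).fun_neg.fun_div (hasDerivAt_id' x) hx).congr_deriv (by ring)

theorem strictAntiOn_mul_sin_add_cos :
    StrictAntiOn (fun x : ℝ => x * sin x + cos x) (Icc (π / 2) (π + π / 2)) := by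
  refine strictAntiOn_of_deriv_neg (convex_Icc _ _) (by fun_prop) fun x hx => ?_
  rw [interior_Icc] at hx
  rw [(hasDerivAt_mul_sin_add_cos x).deriv]
  exact mul_neg_of_pos_of_neg (pi_div_two_pos.trans hx.1)
    (cos_neg_of_pi_div_two_lt_of_lt hx.1 hx.2)

theorem existsUnique_mul_sin_add_cos_eq_zero :
    ∃! a : ℝ, a ∈ Ioo (π / 2) π ∧ a * sin a + cos a = 0 := by
  have hsub : Ioo (π / 2) π ⊆ Icc (π / 2) (π + π / 2) :=
    Ioo_subset_Icc_self.trans (Icc_subset_Icc_right (by linarith [pi_pos]))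
  obtain ⟨a, ha, hza⟩ : ∃ a ∈ Ioo (π / 2) π, a * sin a + cos a = 0 :=
    intermediate_value_Ioo' (f := fun x : ℝ => x * sin x + cos x) (by linarith [pi_pos])
      (by fun_prop) (by simp [pi_pos])
  exact ⟨a, ⟨ha, hza⟩, fun b ⟨hb, hzb⟩ =>
    strictAntiOn_mul_sin_add_cos.injOn (hsub hb) (hsub ha) (hzb.trans hza.symm)⟩

theorem mul_sin_add_cos_pos_of_le_pi_div_two {x : ℝ} (hx₀ : 0 < x) (hx : x ≤ π / 2) :
    0 < x * sin x + cos x :=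
  add_pos_of_pos_of_nonneg (mul_pos hx₀ (sin_pos_of_pos_of_lt_pi hx₀ (by linarith)))
    (cos_nonneg_of_neg_pi_div_two_le_of_le (by linarith) hx)

theorem mul_sin_add_cos_pos_of_lt {a x : ℝ} (ha : a ≤ π + π / 2) (hza : 0 ≤ a * sin a + cos a)
    (hx₀ : 0 < x) (hxa : x < a) : 0 < x * sin x + cos x := by
  rcases le_total x (π / 2) with hx | hx
  · exact mul_sin_add_cos_pos_of_le_pi_div_two hx₀ hx
  · exact hza.trans_lt
      (strictAntiOn_mul_sin_add_cos ⟨hx, hxa.le.trans ha⟩ ⟨hx.trans hxa.le, ha⟩ hxa)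

theorem strictMonoOn_neg_cos_div {a : ℝ} (ha : a ≤ π + π / 2) (hza : 0 ≤ a * sin a + cos a) :
    StrictMonoOn (fun x : ℝ => -cos x / x) (Ioc 0 a) := by
  refine strictMonoOn_of_deriv_pos (convex_Ioc _ _)
    (fun x hx => (hasDerivAt_neg_cos_div hx.1.ne').continuousAt.continuousWithinAt) fun x hx => ?_
  rw [interior_Ioc] at hx
  rw [(hasDerivAt_neg_cos_div hx.1.ne').deriv]
  exact div_pos (mul_sin_add_cos_pos_of_lt ha hza hx.1 hx.2) (pow_pos hx.1 2)

theorem neg_cos_div_eq_neg_one_iff {x : ℝ} (hx : x ≠ 0) : -cos x / x = -1 ↔ cos x = x := by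
  rw [div_eq_iff hx, neg_one_mul, neg_inj]

theorem mem_Ioc_of_cos_eq_self {x : ℝ} (hx : cos x = x) : x ∈ Ioc 0 1 := by
  have habs : |x| ≤ 1 := hx ▸ abs_cos_le_one x
  exact ⟨hx ▸ cos_pos_of_le_one habs, (abs_le.mp habs).2⟩

theorem existsUnique_cos_eq_self : ∃! x : ℝ, cos x = x := by
  obtain ⟨x, -, hx⟩ : ∃ x ∈ Icc (0 : ℝ) 1, cos x = x :=
    exists_mem_Icc_isFixedPt continuous_cos.continuousOn zero_le_one (cos_zero ▸ zero_le_one)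
      (cos_le_one 1)
  have fixed_mem {z : ℝ} (hz : cos z = z) : z ∈ Icc 0 π :=
    ⟨(mem_Ioc_of_cos_eq_self hz).1.le, by linarith [(mem_Ioc_of_cos_eq_self hz).2, pi_gt_three]⟩
  have fixed_le {y z : ℝ} (hy : cos y = y) (hz : cos z = z) : y ≤ z := by
    by_contra! hlt
    have hcos := strictAntiOn_cos (fixed_mem hz) (fixed_mem hy) hlt
    linarith
  exact ⟨x, hx, fun y hy => (fixed_le hy hx).antisymm (fixed_le hx hy)⟩

theorem existsUnique_neg_cos_div_eq_neg_one {a : ℝ} (ha : 1 < a) :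
    ∃! x : ℝ, x ∈ Ioo 0 a ∧ -cos x / x = -1 := by
  obtain ⟨x, hx, hunique⟩ := existsUnique_cos_eq_self
  obtain ⟨hx₀, hx₁⟩ := mem_Ioc_of_cos_eq_self hx
  exact ⟨x, ⟨⟨hx₀, hx₁.trans_lt ha⟩, (neg_cos_div_eq_neg_one_iff hx₀.ne').mpr hx⟩,
    fun y ⟨hy, hval⟩ => hunique y ((neg_cos_div_eq_neg_one_iff hy.1.ne').mp hval)⟩

/-- There is a unique `a ∈ (π/2, π)` with `a·sin a + cos a = 0` (the least positive
critical point of `y₀(x) = -cos x / x`); the function `x ↦ -cos x / x` is strictly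
monotone increasing on `(0, a]`; there is a unique `x ∈ (0, a)` with `-cos x / x = -1`;
and this unique `x` satisfies `cos x = x`, i.e. it is the Dottie number. -/
theorem dottie_is_inverse_one_y0_neg_one :
    (∃! a : ℝ, a ∈ Set.Ioo (π / 2) π ∧ a * Real.sin a + Real.cos a = 0) ∧
    ∀ a : ℝ, a ∈ Set.Ioo (π / 2) π → a * Real.sin a + Real.cos a = 0 →
      StrictMonoOn (fun x : ℝ => -Real.cos x / x) (Set.Ioc 0 a) ∧
      (∃! x : ℝ, x ∈ Set.Ioo 0 a ∧ -Real.cos x / x = -1) ∧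
      (∀ x : ℝ, x ∈ Set.Ioo 0 a → -Real.cos x / x = -1 → Real.cos x = x) := by
  refine ⟨existsUnique_mul_sin_add_cos_eq_zero, fun a ha hza => ⟨?_, ?_, fun x hx => ?_⟩⟩
  · exact strictMonoOn_neg_cos_div (by linarith [ha.2, pi_pos]) hza.ge
  · exact existsUnique_neg_cos_div_eq_neg_one (by linarith [ha.1, pi_gt_three])
  · exact (neg_cos_div_eq_neg_one_iff hx.1.ne').mp
end

section
/- For every natural number n and every real x ≠ 0, the function Y n satisfies the spherical Bessel differential equation: x² · (deriv (deriv (Y n))) x + 2·x · (deriv (Y n)) x + (x² - n·(n+1)) · Y n x = 0. -/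
/-- The spherical Bessel functions of the second kind `y_n`, defined via the
closed forms of `y₀`, `y₁` and the standard recurrence. -/
noncomputable def Y : ℕ → ℝ → ℝ
  | 0, x => -Real.cos x / x
  | 1, x => -Real.cos x / x ^ 2 - Real.sin x / x
  | (n + 2), x => ((2 * ((n : ℝ) + 1) + 1) / x) * Y (n + 1) x - Y n x

/-!
Two consecutive spherical Bessel functions solve a first-order linear system (the ladder
relations), which the three-term recurrence carries from each index to the next. Eliminating the
second function from the system leaves the second-order equation for the first.
-/

open scoped Topology

section Ladder

variable {𝕜 : Type*} [NontriviallyNormedField 𝕜] {ν x : 𝕜} {f g : 𝕜 → 𝕜}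

/-- The ladder relations at the point `x` between spherical Bessel functions `f` of index `ν` and
`g` of index `ν + 1`. The index lies in the field, so it need not be an integer, and `f`, `g` may
be of either kind. -/
structure SphericalBesselLadderAt (ν : 𝕜) (f g : 𝕜 → 𝕜) (x : 𝕜) : Prop where
  hasDerivAt_fst : HasDerivAt f (ν / x * f x - g x) x
  hasDerivAt_snd : HasDerivAt g (f x - (ν + 2) / x * g x) x

namespace SphericalBesselLadderAt

theorem succ (hx : x ≠ 0) (h : SphericalBesselLadderAt ν f g x) :
    SphericalBesselLadderAt (ν + 1) g (fun t ↦ (2 * (ν + 1) + 1) / t * g t - f t) x where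
  hasDerivAt_fst := h.hasDerivAt_snd.congr_deriv (by ring)
  hasDerivAt_snd := by
    have h_coeff : HasDerivAt (fun t ↦ (2 * (ν + 1) + 1) / t) (-(2 * (ν + 1) + 1) / x ^ 2) x :=
      ((hasDerivAt_const x _).fun_div (hasDerivAt_id' x) hx).congr_deriv (by ring)
    refine ((h_coeff.fun_mul h.hasDerivAt_snd).fun_sub h.hasDerivAt_fst).congr_deriv ?_
    field_simp
    ring

theorem hasDerivAt_deriv (hx : x ≠ 0) (h : ∀ᶠ t in 𝓝 x, SphericalBesselLadderAt ν f g t) :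
    HasDerivAt (deriv f) ((ν * (ν - 1) / x ^ 2 - 1) * f x + 2 / x * g x) x := by
  have h_deriv : deriv f =ᶠ[𝓝 x] fun t ↦ ν / t * f t - g t :=
    h.mono fun _ ht ↦ ht.hasDerivAt_fst.deriv
  have h_coeff : HasDerivAt (fun t ↦ ν / t) (-ν / x ^ 2) x :=
    ((hasDerivAt_const x ν).fun_div (hasDerivAt_id' x) hx).congr_deriv (by ring)
  obtain ⟨hf, hg⟩ := h.self_of_nhds
  refine HasDerivAt.congr_of_eventuallyEq ?_ h_deriv
  refine ((h_coeff.fun_mul hf).fun_sub hg).congr_deriv ?_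
  field_simp
  ring

theorem sphericalBessel_ode (hx : x ≠ 0) (h : ∀ᶠ t in 𝓝 x, SphericalBesselLadderAt ν f g t) :
    x ^ 2 * deriv (deriv f) x + 2 * x * deriv f x + (x ^ 2 - ν * (ν + 1)) * f x = 0 := by
  rw [(hasDerivAt_deriv hx h).deriv, h.self_of_nhds.hasDerivAt_fst.deriv]
  field_simp
  ring

end SphericalBesselLadderAt

end Ladder

theorem hasDerivAt_Y_zero {x : ℝ} (hx : x ≠ 0) : HasDerivAt (Y 0) (-Y 1 x) x := by
  refine ((Real.hasDerivAt_cos x).fun_neg.fun_div (hasDerivAt_id' x) hx).congr_deriv ?_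
  rw [Y]
  field_simp
  ring

theorem hasDerivAt_Y_one {x : ℝ} (hx : x ≠ 0) :
    HasDerivAt (Y 1) (Y 0 x - 2 / x * Y 1 x) x := by
  have h_cos := (Real.hasDerivAt_cos x).fun_neg.fun_div (hasDerivAt_pow 2 x) (pow_ne_zero 2 hx)
  have h_sin := (Real.hasDerivAt_sin x).fun_div (hasDerivAt_id' x) hx
  refine (h_cos.fun_sub h_sin).congr_deriv ?_
  rw [Y, Y]
  field_simp
  ring

theorem sphericalBesselLadderAt_Y (n : ℕ) {x : ℝ} (hx : x ≠ 0) :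
    SphericalBesselLadderAt (n : ℝ) (Y n) (Y (n + 1)) x := by
  induction n with
  | zero =>
    exact ⟨(hasDerivAt_Y_zero hx).congr_deriv (by simp),
      (hasDerivAt_Y_one hx).congr_deriv (by simp)⟩
  | succ n ih =>
    rw [Nat.cast_succ]
    exact ih.succ hx

/-- For every natural number `n` and every real `x ≠ 0`, `Y n` satisfies the
spherical Bessel differential equation
`x² y'' + 2 x y' + (x² - n(n+1)) y = 0`. -/
theorem Y_satisfies_spherical_bessel_ODE (n : ℕ) (x : ℝ) (hx : x ≠ 0) :
    x ^ 2 * (deriv (deriv (Y n))) x + 2 * x * (deriv (Y n)) x +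
      (x ^ 2 - (n : ℝ) * ((n : ℝ) + 1)) * Y n x = 0 :=
  SphericalBesselLadderAt.sphericalBessel_ode hx <|
    (eventually_ne_nhds hx).mono fun _ ht ↦ sphericalBesselLadderAt_Y n ht
end

section
/- For every natural number n and every real x ≠ 0, the function J n satisfies the spherical Bessel differential equation: x² · (deriv (deriv (J n))) x + 2·x · (deriv (J n)) x + (x² - n·(n+1)) · J n x = 0. -/
/-- The spherical Bessel functions of the first kind `j_n`, defined via the
closed forms of `j₀`, `j₁` and the standard recurrence. -/
noncomputable def J : ℕ → ℝ → ℝ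
  | 0, x => Real.sin x / x
  | 1, x => Real.sin x / x ^ 2 - Real.cos x / x
  | (n + 2), x => ((2 * ((n : ℝ) + 1) + 1) / x) * J (n + 1) x - J n x

/-!
The raising relation `j_n' = (n / x) j_n - j_{n+1}` and the lowering relation
`j_{n+1}' = j_n - ((n + 2) / x) j_{n+1}` are proved together by induction: the three-term recurrence
turns the lowering relation for `j_{n+1}` into its raising relation, and differentiating the
recurrence gives the lowering relation for `j_{n+2}`. Differentiating the raising relation once
more and eliminating `j_{n+1}` gives the differential equation.
-/

section Ladder

open scoped Topology

variable {𝕜 : Type*} [NontriviallyNormedField 𝕜] {f g : 𝕜 → 𝕜} {a x : 𝕜}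

theorem hasDerivAt_const_div (a : 𝕜) (hx : x ≠ 0) :
    HasDerivAt (fun y => a / y) (-a / x ^ 2) x := by
  simpa [div_eq_mul_inv] using (hasDerivAt_inv hx).const_mul a

theorem hasDerivAt_recurrence_of_ladder (hx : x ≠ 0)
    (hf : HasDerivAt f (a / x * f x - g x) x)
    (hg : HasDerivAt g (f x - (a + 2) / x * g x) x) :
    HasDerivAt (fun y => (2 * (a + 1) + 1) / y * g y - f y)
      (g x - (a + 1 + 2) / x * ((2 * (a + 1) + 1) / x * g x - f x)) x := by
  refine (((hasDerivAt_const_div _ hx).fun_mul hg).fun_sub hf).congr_deriv ?_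
  field_simp
  ring

theorem spherical_bessel_ODE_of_ladder (hx : x ≠ 0)
    (hf : ∀ᶠ y in 𝓝 x, HasDerivAt f (a / y * f y - g y) y)
    (hg : HasDerivAt g (f x - (a + 2) / x * g x) x) :
    x ^ 2 * deriv (deriv f) x + 2 * x * deriv f x + (x ^ 2 - a * (a + 1)) * f x = 0 := by
  have deriv_f : deriv f =ᶠ[𝓝 x] fun y => a / y * f y - g y :=
    hf.mono fun _ hy => hy.deriv
  have deriv_deriv_f : deriv (deriv f) x =
      -a / x ^ 2 * f x + a / x * (a / x * f x - g x) - (f x - (a + 2) / x * g x) :=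
    deriv_f.deriv_eq.trans
      (((hasDerivAt_const_div a hx).fun_mul hf.self_of_nhds).fun_sub hg).deriv
  rw [deriv_deriv_f, deriv_f.eq_of_nhds]
  field_simp
  ring

end Ladder

section SphericalBessel

variable {x : ℝ}

theorem J_zero : J 0 = fun x => Real.sin x / x := by
  funext x
  rw [J]

theorem J_one : J 1 = fun x => Real.sin x / x ^ 2 - Real.cos x / x := by
  funext x
  rw [J]

theorem J_add_two (n : ℕ) :
    J (n + 2) = fun x => (2 * ((n : ℝ) + 1) + 1) / x * J (n + 1) x - J n x := by
  funext x
  rw [J]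

theorem hasDerivAt_J_zero (hx : x ≠ 0) : HasDerivAt (J 0) (-J 1 x) x := by
  rw [J_zero, J_one]
  refine ((Real.hasDerivAt_sin x).fun_div (hasDerivAt_id' x) hx).congr_deriv ?_
  field_simp
  ring

theorem hasDerivAt_J_one (hx : x ≠ 0) : HasDerivAt (J 1) (J 0 x - 2 / x * J 1 x) x := by
  rw [J_zero, J_one]
  refine (((Real.hasDerivAt_sin x).fun_div (hasDerivAt_pow 2 x) (pow_ne_zero 2 hx)).fun_sub
    ((Real.hasDerivAt_cos x).fun_div (hasDerivAt_id' x) hx)).congr_deriv ?_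
  field_simp
  ring

theorem J_sub_div_mul_J_succ (n : ℕ) (x : ℝ) :
    J n x - (n + 2) / x * J (n + 1) x = (n + 1) / x * J (n + 1) x - J (n + 2) x := by
  rw [J_add_two]
  ring

theorem hasDerivAt_J_and_J_succ (n : ℕ) (hx : x ≠ 0) :
    HasDerivAt (J n) (n / x * J n x - J (n + 1) x) x ∧
      HasDerivAt (J (n + 1)) (J n x - (n + 2) / x * J (n + 1) x) x := by
  induction n with
  | zero => exact ⟨by simpa using hasDerivAt_J_zero hx, by simpa using hasDerivAt_J_one hx⟩
  | succ n ih =>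
    obtain ⟨raising, lowering⟩ := ih
    push_cast
    constructor
    · exact lowering.congr_deriv (J_sub_div_mul_J_succ n x)
    · rw [J_add_two]
      exact hasDerivAt_recurrence_of_ladder hx raising lowering

end SphericalBessel

/-- For every natural number `n` and every real `x ≠ 0`, `J n` satisfies the
spherical Bessel differential equation
`x² y'' + 2 x y' + (x² - n(n+1)) y = 0`. -/
theorem J_satisfies_spherical_bessel_ODE (n : ℕ) (x : ℝ) (hx : x ≠ 0) :
    x ^ 2 * (deriv (deriv (J n))) x + 2 * x * (deriv (J n)) x +
      (x ^ 2 - (n : ℝ) * ((n : ℝ) + 1)) * J n x = 0 := by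
  have raising_near_x := (eventually_ne_nhds hx).mono fun _ hy => (hasDerivAt_J_and_J_succ n hy).1
  have lowering_at_x := (hasDerivAt_J_and_J_succ n hx).2
  exact spherical_bessel_ODE_of_ladder hx raising_near_x lowering_at_x
end

section
/- For every natural number n and every real x ≠ 0, the function I n satisfies the modified spherical Bessel differential equation: x² · (deriv (deriv (I n))) x + 2·x · (deriv (I n)) x - (x² + n·(n+1)) · I n x = 0. -/
/-- The modified spherical Bessel functions of the first kind `i_n`, defined via
the closed forms of `i₀`, `i₁` and the standard recurrence. -/
noncomputable def I : ℕ → ℝ → ℝ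
  | 0, x => Real.sinh x / x
  | 1, x => Real.cosh x / x - Real.sinh x / x ^ 2
  | (n + 2), x => I n x - ((2 * ((n : ℝ) + 1) + 1) / x) * I (n + 1) x

/-!
Consecutive functions `f = iᵥ`, `g = iᵥ₊₁` satisfy the first-order ladder system
`f' = g + (ν/x) f`, `g' = f - ((ν+2)/x) g`. The three-term recurrence carries this system from `ν`
to `ν + 1`, and eliminating `g` gives the second-order equation for `f`. The recurrence also holds
one step below `i₀`, with `i₋₁ = cosh x / x`, so the induction can start at the pair
`(cosh x / x, sinh x / x)`, where the ladder system only says that `cosh` and `sinh` are each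
other's derivatives.
-/

open scoped Topology

section Ladder

variable {𝕜 : Type*} [NontriviallyNormedField 𝕜]

/-- The ladder system at `x` for modified spherical Bessel functions `f` of order `ν` and `g` of
order `ν + 1`. The order is an arbitrary scalar, so that `ν = -1` is available. -/
structure HasBesselLadderAt (ν : 𝕜) (f g : 𝕜 → 𝕜) (x : 𝕜) : Prop where
  hasDerivAt_left : HasDerivAt f (g x + ν / x * f x) x
  hasDerivAt_right : HasDerivAt g (f x - (ν + 2) / x * g x) x

variable {ν x : 𝕜} {f g : 𝕜 → 𝕜}

theorem hasDerivAt_const_div_id_mul {f' : 𝕜} (hf : HasDerivAt f f' x) (c : 𝕜) (hx : x ≠ 0) :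
    HasDerivAt (fun y ↦ c / y * f y) (c / x * (f' - f x / x)) x := by
  refine (((hasDerivAt_const x c).fun_div (hasDerivAt_id' x) hx).fun_mul hf).congr_deriv ?_
  field_simp
  ring

theorem hasBesselLadderAt_neg_one (hf : HasDerivAt f (g x) x) (hg : HasDerivAt g (f x) x)
    (hx : x ≠ 0) : HasBesselLadderAt (-1) (fun y ↦ f y / y) (fun y ↦ g y / y) x where
  hasDerivAt_left := by
    refine (hf.fun_div (hasDerivAt_id' x) hx).congr_deriv ?_
    field_simp
    ring
  hasDerivAt_right := by
    refine (hg.fun_div (hasDerivAt_id' x) hx).congr_deriv ?_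
    field_simp
    ring

namespace HasBesselLadderAt

theorem add_one (h : HasBesselLadderAt ν f g x) (hx : x ≠ 0) :
    HasBesselLadderAt (ν + 1) g (fun y ↦ f y - (2 * (ν + 1) + 1) / y * g y) x where
  hasDerivAt_left := h.hasDerivAt_right.congr_deriv (by ring)
  hasDerivAt_right := by
    have hg := hasDerivAt_const_div_id_mul h.hasDerivAt_right (2 * (ν + 1) + 1) hx
    refine (h.hasDerivAt_left.fun_sub hg).congr_deriv ?_
    field_simp
    ring

theorem hasDerivAt_deriv (h : ∀ᶠ y in 𝓝 x, HasBesselLadderAt ν f g y) (hx : x ≠ 0) :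
    HasDerivAt (deriv f) ((1 + ν * (ν - 1) / x ^ 2) * f x - 2 / x * g x) x := by
  have hderiv : deriv f =ᶠ[𝓝 x] fun y ↦ g y + ν / y * f y :=
    h.mono fun y hy ↦ hy.hasDerivAt_left.deriv
  obtain ⟨hf, hg⟩ := h.self_of_nhds
  have hraise := hg.fun_add (hasDerivAt_const_div_id_mul hf ν hx)
  refine (hraise.congr_of_eventuallyEq hderiv).congr_deriv ?_
  field_simp
  ring

theorem modified_spherical_bessel_ODE (h : ∀ᶠ y in 𝓝 x, HasBesselLadderAt ν f g y) (hx : x ≠ 0) :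
    x ^ 2 * deriv (deriv f) x + 2 * x * deriv f x - (x ^ 2 + ν * (ν + 1)) * f x = 0 := by
  rw [(hasDerivAt_deriv h hx).deriv, h.self_of_nhds.hasDerivAt_left.deriv]
  field_simp
  ring

end HasBesselLadderAt

end Ladder

theorem I_zero : I 0 = fun y ↦ Real.sinh y / y := by
  ext y
  rw [I]

theorem I_one_eq_recurrence :
    I 1 = fun y ↦ Real.cosh y / y - (2 * (-1 + 1) + 1) / y * (Real.sinh y / y) := by
  ext y
  rw [I]
  ring

theorem I_add_two (n : ℕ) :
    I (n + 2) = fun y ↦ I n y - (2 * ((n : ℝ) + 1) + 1) / y * I (n + 1) y := by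
  ext y
  rw [I]

theorem hasBesselLadderAt_I (n : ℕ) {x : ℝ} (hx : x ≠ 0) :
    HasBesselLadderAt (n : ℝ) (I n) (I (n + 1)) x := by
  induction n with
  | zero =>
    have hbase :=
      hasBesselLadderAt_neg_one (Real.hasDerivAt_cosh x) (Real.hasDerivAt_sinh x) hx
    rw [zero_add, I_zero, I_one_eq_recurrence]
    simpa only [Nat.cast_zero, neg_add_cancel] using hbase.add_one hx
  | succ n ih =>
    rw [I_add_two, Nat.cast_add_one]
    exact ih.add_one hx

/-- For every natural number `n` and every real `x ≠ 0`, `I n` satisfies the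
modified spherical Bessel differential equation
`x² y'' + 2 x y' - (x² + n(n+1)) y = 0`. -/
theorem I_satisfies_modified_spherical_bessel_ODE (n : ℕ) (x : ℝ) (hx : x ≠ 0) :
    x ^ 2 * (deriv (deriv (I n))) x + 2 * x * (deriv (I n)) x -
      (x ^ 2 + (n : ℝ) * ((n : ℝ) + 1)) * I n x = 0 := by
  have hladder : ∀ᶠ y in 𝓝 x, HasBesselLadderAt (n : ℝ) (I n) (I (n + 1)) y :=
    (eventually_ne_nhds hx).mono fun y hy ↦ hasBesselLadderAt_I n hy
  exact HasBesselLadderAt.modified_spherical_bessel_ODE hladder hx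
end

section
/- Define R : ℕ → ℝ → ℝ by R 0 x = cos x / x and R (n+1) x = (deriv (R n)) x / x. Then for every natural number n and every real x ≠ 0, Y n x = -(-x)^n · R n x (Lord Rayleigh's formula y_n(x) = -(-x)^n ((1/x) d/dx)^n (cos x / x)). -/
/-- The iterated operator `((1/x) d/dx)^n` applied to `cos x / x`. -/
noncomputable def R : ℕ → ℝ → ℝ
  | 0, x => Real.cos x / x
  | (n + 1), x => (deriv (R n)) x / x

/-!
Write `D = (1/x) d/dx`. Since `f' = x D f`, differentiating `x² D²f + c D f + l f = 0` and
dividing by `x` gives the same equation for `D f` with `c + 2` in place of `c`. The equation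
`f'' = -f`, solved by `sin`, is the case `c = l = 1`. As `cos x / x = D sin x`, the `n`-th function
in Rayleigh's formula is `Dⁿ⁺¹ sin`, and the equations for the iterates `Dⁿ sin` become the Bessel
recurrence after multiplication by powers of `-x`.
-/

open Filter Topology

section RayleighOp

variable {𝕜 E : Type*} [NontriviallyNormedField 𝕜] [NormedAddCommGroup E] [NormedSpace 𝕜 E]
  {f : 𝕜 → E} {x : 𝕜}

/-- The operator `(1/x) d/dx` of Rayleigh's formulas for the spherical Bessel functions, on
functions with values in a normed space. At `x = 0` it takes the junk value `0`. -/
noncomputable def rayleighOp (f : 𝕜 → E) (x : 𝕜) : E := x⁻¹ • deriv f x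

theorem smul_rayleighOp (f : 𝕜 → E) (hx : x ≠ 0) : x • rayleighOp f x = deriv f x :=
  smul_inv_smul₀ hx _

theorem hasDerivAt_smul_rayleighOp (hf : DifferentiableAt 𝕜 f x) (hx : x ≠ 0) :
    HasDerivAt f (x • rayleighOp f x) x := by
  simpa only [smul_rayleighOp f hx] using hf.hasDerivAt

theorem analyticAt_rayleighOp [CompleteSpace E] (hf : AnalyticAt 𝕜 f x) (hx : x ≠ 0) :
    AnalyticAt 𝕜 (rayleighOp f) x :=
  (analyticAt_id.inv hx).smul hf.deriv

theorem sq_smul_rayleighOp_rayleighOp_add (hf : DifferentiableAt 𝕜 (deriv f) x) (hx : x ≠ 0) :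
    x ^ 2 • rayleighOp (rayleighOp f) x + rayleighOp f x = deriv (deriv f) x := by
  have hdf : DifferentiableAt 𝕜 (rayleighOp f) x := (differentiableAt_inv hx).smul hf
  have hderiv : deriv f =ᶠ[𝓝 x] fun y ↦ y • rayleighOp f y := by
    filter_upwards [eventually_ne_nhds hx] with y hy using (smul_rayleighOp f hy).symm
  have hprod := (hasDerivAt_id x).smul (hasDerivAt_smul_rayleighOp hdf hx)
  rw [(hprod.congr_of_eventuallyEq hderiv).deriv, id, smul_smul, one_smul, sq]

theorem rayleighOp_recurrence_succ [CompleteSpace E] {c l : 𝕜} (hf : AnalyticAt 𝕜 f x) (hx : x ≠ 0)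
    (h : ∀ᶠ y in 𝓝 x,
      y ^ 2 • rayleighOp (rayleighOp f) y + c • rayleighOp f y + l • f y = 0) :
    ∀ᶠ y in 𝓝 x, y ^ 2 • rayleighOp (rayleighOp (rayleighOp f)) y +
      (c + 2) • rayleighOp (rayleighOp f) y + l • rayleighOp f y = 0 := by
  filter_upwards [h.eventually_nhds, hf.eventually_analyticAt, eventually_ne_nhds hx]
    with y hy hfy hy₀
  have hf₁ := analyticAt_rayleighOp hfy hy₀
  have hf₂ := analyticAt_rayleighOp hf₁ hy₀
  have hsq := (hasDerivAt_pow 2 y).smul (hasDerivAt_smul_rayleighOp hf₂.differentiableAt hy₀)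
  have hc := (hasDerivAt_smul_rayleighOp hf₁.differentiableAt hy₀).const_smul c
  have hl := (hasDerivAt_smul_rayleighOp hfy.differentiableAt hy₀).const_smul l
  have hzero := (hasDerivAt_const y (0 : E)).congr_of_eventuallyEq hy
  refine (smul_eq_zero_iff_right hy₀).mp ?_
  rw [← ((hsq.add hc).add hl).unique hzero]
  simp only [Nat.cast_ofNat, Nat.add_one_sub_one, pow_one]
  module

theorem rayleighOp_iterate_recurrence [CompleteSpace E] {c l : 𝕜} (hf : AnalyticAt 𝕜 f x)
    (hx : x ≠ 0)
    (h : ∀ᶠ y in 𝓝 x,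
      y ^ 2 • rayleighOp (rayleighOp f) y + c • rayleighOp f y + l • f y = 0) (n : ℕ) :
    x ^ 2 • rayleighOp^[n + 2] f x + (2 * n + c) • rayleighOp^[n + 1] f x +
      l • rayleighOp^[n] f x = 0 := by
  induction n generalizing f c with
  | zero => simpa using h.self_of_nhds
  | succ n ih =>
    have hstep := ih (analyticAt_rayleighOp hf hx) (rayleighOp_recurrence_succ hf hx h)
    have hcoeff : 2 * ((n + 1 : ℕ) : 𝕜) + c = 2 * n + (c + 2) := by push_cast; ring
    rw [hcoeff]
    exact hstep

end RayleighOp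

theorem rayleighOp_iterate_sin_recurrence (n : ℕ) {x : ℝ} (hx : x ≠ 0) :
    x ^ 2 * rayleighOp^[n + 2] Real.sin x + (2 * n + 1) * rayleighOp^[n + 1] Real.sin x +
      rayleighOp^[n] Real.sin x = 0 := by
  have hode : ∀ᶠ y in 𝓝 x, y ^ 2 • rayleighOp (rayleighOp Real.sin) y +
      (1 : ℝ) • rayleighOp Real.sin y + (1 : ℝ) • Real.sin y = 0 := by
    filter_upwards [eventually_ne_nhds hx] with y hy
    have hsin : DifferentiableAt ℝ (deriv Real.sin) y := by
      simpa only [Real.deriv_sin] using Real.differentiableAt_cos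
    rw [one_smul, one_smul, sq_smul_rayleighOp_rayleighOp_add hsin hy, Real.deriv_sin,
      Real.deriv_cos, neg_add_cancel]
  simpa only [smul_eq_mul, one_mul] using
    rayleighOp_iterate_recurrence Real.analyticAt_sin hx hode n

theorem R_eq_rayleighOp_iterate_sin (n : ℕ) : R n = rayleighOp^[n + 1] Real.sin := by
  induction n with
  | zero =>
    ext x
    simp [R, rayleighOp, div_eq_inv_mul]
  | succ n ih =>
    ext x
    rw [Function.iterate_succ_apply', ← ih, R, rayleighOp, smul_eq_mul, div_eq_inv_mul]

/-- Lord Rayleigh's formula: `y_n(x) = -(-x)^n ((1/x) d/dx)^n (cos x / x)`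
for every natural number `n` and every real `x ≠ 0`. -/
theorem Y_eq_rayleigh_formula (n : ℕ) (x : ℝ) (hx : x ≠ 0) :
    Y n x = -(-x) ^ n * R n x := by
  induction n using Nat.twoStepInduction with
  | zero => simp [Y, R, neg_div]
  | one =>
    have hrec : x ^ 2 * R 1 x + R 0 x + Real.sin x = 0 := by
      simpa [R_eq_rayleighOp_iterate_sin] using rayleighOp_iterate_sin_recurrence 0 hx
    rw [R] at hrec
    rw [Y]
    field_simp at hrec ⊢
    linear_combination -hrec
  | more n ih₀ ih₁ =>
    have hrec : x ^ 2 * R (n + 2) x + (2 * (n + 1 : ℕ) + 1) * R (n + 1) x + R n x = 0 := by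
      simpa only [R_eq_rayleighOp_iterate_sin] using rayleighOp_iterate_sin_recurrence (n + 1) hx
    rw [Y, ih₀, ih₁]
    push_cast at hrec
    field_simp
    linear_combination (-x) ^ n * x * hrec
end

section
/- For every natural number n there exists an integer sequence c : ℕ → ℤ with c ℓ > 0 for all 1 ≤ ℓ ≤ n+1, with c 1 = 1 and leading coefficient c (n+1) = (2n)! / (2^n · n!) (the double factorial (2n-1)!!), such that for all real x ≠ 0, K n x = (∑_{ℓ=1}^{n+1} (c ℓ) / x^ℓ) · exp(-x). -/
/-- The modified spherical Bessel functions of the second kind `k_n`, defined via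
the closed forms of `k₀`, `k₁` and the standard recurrence. -/
noncomputable def K : ℕ → ℝ → ℝ
  | 0, x => Real.exp (-x) / x
  | 1, x => (1 / x ^ 2 + 1 / x) * Real.exp (-x)
  | (n + 2), x => K n x + ((2 * (n : ℝ) + 3) / x) * K (n + 1) x

/-! `k_n(x) = x⁻¹ y_n(x⁻¹) exp(-x)`, where `y_n` is the `n`-th Bessel polynomial: both sides satisfy
the same recurrence. The coefficient of `X ^ k` in `y_n` is `(n + k).choose (2 * k) * (2 * k - 1)‼`,
from which positivity, the constant coefficient and the leading coefficient can be read off. For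
`k = 0` truncated subtraction makes the double factorial `0‼ = 1`, the usual value of `(-1)‼`. -/

open Polynomial
open scoped Nat

theorem doubleFactorial_two_mul_sub_one_mul (n : ℕ) :
    (2 * n - 1)‼ * (2 ^ n * n !) = (2 * n)! := by
  cases n with
  | zero => rfl
  | succ n =>
    rw [← Nat.doubleFactorial_two_mul, mul_comm]
    exact (Nat.factorial_eq_mul_doubleFactorial (2 * n + 1)).symm

theorem inv_mul_aeval_inv_eq_sum_Icc {R F : Type*} [CommSemiring R] [Semifield F] [Algebra R F]
    {p : R[X]} {n : ℕ} (hp : p.natDegree ≤ n) (x : F) :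
    x⁻¹ * aeval x⁻¹ p =
      ∑ ℓ ∈ Finset.Icc 1 (n + 1), algebraMap R F (p.coeff (ℓ - 1)) / x ^ ℓ := by
  rw [aeval_eq_sum_range' (Nat.lt_succ_of_le hp), Finset.mul_sum,
    ← Finset.Ico_add_one_right_eq_Icc, Finset.range_eq_Ico, ← Finset.sum_Ico_add' _ 0 (n + 1) 1]
  refine Finset.sum_congr rfl fun k _ ↦ ?_
  rw [Nat.add_sub_cancel, Algebra.smul_def]
  ring

theorem choose_succ_mul_succ_add_choose_mul (n k : ℕ) :
    n.choose (k + 1) * (k + 1) + n.choose k * k = n.choose k * n := by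
  have h := Nat.add_one_mul_choose_eq n k
  rw [Nat.choose_succ_succ'] at h
  linarith

/-- The Bessel polynomials `y_n` of Krall and Frink, given by their three-term recurrence. Their
coefficients are natural numbers, so they are taken in `ℕ[X]`. -/
noncomputable def besselPolynomial : ℕ → ℕ[X]
  | 0 => 1
  | 1 => 1 + X
  | n + 2 => besselPolynomial n + C (2 * n + 3) * (X * besselPolynomial (n + 1))

theorem K_eq_inv_mul_aeval_besselPolynomial (n : ℕ) (x : ℝ) :
    K n x = x⁻¹ * aeval x⁻¹ (besselPolynomial n) * Real.exp (-x) := by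
  induction n using Nat.twoStepInduction with
  | zero =>
    simp only [K, besselPolynomial, map_one]
    ring
  | one =>
    simp only [K, besselPolynomial, map_add, map_one, aeval_X]
    ring
  | more n ih₀ ih₁ =>
    simp only [K, ih₀, ih₁, besselPolynomial, map_add, map_mul, aeval_X, map_ofNat,
      eq_natCast, map_natCast]
    ring

/-- The recurrence `y_{n+2} = y_n + (2n + 3) X y_{n+1}` in the coefficient of `X ^ (k + 1)`. -/
theorem choose_mul_doubleFactorial_recurrence (n k : ℕ) :
    (n + k + 3).choose (2 * k + 2) * (2 * k + 1)‼ =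
      (n + k + 1).choose (2 * k + 2) * (2 * k + 1)‼ +
        (2 * n + 3) * ((n + k + 1).choose (2 * k) * (2 * k - 1)‼) := by
  have pascal : (n + k + 3).choose (2 * k + 2) = (n + k + 1).choose (2 * k) +
      2 * (n + k + 1).choose (2 * k + 1) + (n + k + 1).choose (2 * k + 2) := by
    simp only [Nat.choose_succ_succ' (n + k + 2), Nat.choose_succ_succ' (n + k + 1)]
    ring
  rw [pascal, Nat.doubleFactorial_add_one]
  linear_combination 2 * (2 * k - 1)‼ * choose_succ_mul_succ_add_choose_mul (n + k + 1) (2 * k)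

theorem coeff_besselPolynomial (n k : ℕ) :
    (besselPolynomial n).coeff k = (n + k).choose (2 * k) * (2 * k - 1)‼ := by
  induction n using Nat.twoStepInduction generalizing k with
  | zero =>
    cases k with
    | zero => simp [besselPolynomial]
    | succ k => simp [besselPolynomial, coeff_one, Nat.choose_eq_zero_of_lt]
  | one =>
    match k with
    | 0 => simp [besselPolynomial]
    | 1 => simp [besselPolynomial, coeff_one]
    | k + 2 =>
      have : (1 + (k + 2)).choose (2 * (k + 2)) = 0 := Nat.choose_eq_zero_of_lt (by lia)
      simp [besselPolynomial, coeff_one, coeff_X, this]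
  | more n ih₀ ih₁ =>
    cases k with
    | zero => simp [besselPolynomial, ih₀]
    | succ k =>
      rw [besselPolynomial, coeff_add, coeff_C_mul, coeff_X_mul, ih₀, ih₁,
        show n + 2 + (k + 1) = n + k + 3 by ring, add_right_comm n 1 k]
      exact (choose_mul_doubleFactorial_recurrence n k).symm

theorem coeff_besselPolynomial_zero (n : ℕ) : (besselPolynomial n).coeff 0 = 1 := by
  simp [coeff_besselPolynomial]

theorem coeff_besselPolynomial_self (n : ℕ) : (besselPolynomial n).coeff n = (2 * n - 1)‼ := by
  rw [coeff_besselPolynomial, ← two_mul, Nat.choose_self, one_mul]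

theorem coeff_besselPolynomial_pos {n k : ℕ} (h : k ≤ n) : 0 < (besselPolynomial n).coeff k := by
  rw [coeff_besselPolynomial]
  exact Nat.mul_pos (Nat.choose_pos (by lia)) (Nat.doubleFactorial_pos _)

theorem natDegree_besselPolynomial_le (n : ℕ) : (besselPolynomial n).natDegree ≤ n := by
  refine natDegree_le_iff_coeff_eq_zero.mpr fun k hk ↦ ?_
  rw [coeff_besselPolynomial, Nat.choose_eq_zero_of_lt (by lia), zero_mul]

/-- For every `n` there is an integer sequence `c` with `c ℓ > 0` for `1 ≤ ℓ ≤ n+1`,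
`c 1 = 1` and leading coefficient `c (n+1) = (2n)! / (2^n · n!)` (the double
factorial `(2n-1)!!`), such that for all real `x ≠ 0`,
`k_n(x) = (∑_{ℓ=1}^{n+1} c ℓ / x^ℓ) · exp(-x)`. -/
theorem K_eq_laurent_exp (n : ℕ) :
    ∃ c : ℕ → ℤ,
      (∀ ℓ : ℕ, 1 ≤ ℓ → ℓ ≤ n + 1 → 0 < c ℓ) ∧
      c 1 = 1 ∧
      (c (n + 1) : ℚ) = ((2 * n).factorial : ℚ) / (2 ^ n * (n.factorial : ℚ)) ∧
      ∀ x : ℝ, x ≠ 0 →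
        K n x = (∑ ℓ ∈ Finset.Icc 1 (n + 1), (c ℓ : ℝ) / x ^ ℓ) * Real.exp (-x) := by
  refine ⟨fun ℓ ↦ (besselPolynomial n).coeff (ℓ - 1), fun ℓ _ hℓ ↦ ?_, ?_, ?_, fun x _ ↦ ?_⟩
  · exact Int.natCast_pos.mpr (coeff_besselPolynomial_pos (Nat.sub_le_of_le_add hℓ))
  · exact congrArg Nat.cast (coeff_besselPolynomial_zero n)
  · simp only [Nat.add_sub_cancel, coeff_besselPolynomial_self]
    rw [eq_div_iff (by positivity)]
    exact_mod_cast doubleFactorial_two_mul_sub_one_mul n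
  · rw [K_eq_inv_mul_aeval_besselPolynomial,
      inv_mul_aeval_inv_eq_sum_Icc (natDegree_besselPolynomial_le n)]
    simp only [eq_natCast, Int.cast_natCast]
end

section
/- For every natural number n, the function J n tends, as x tends to 0 along nonzero real values (the punctured neighborhood filter 𝓝[≠] 0), to 1 if n = 0 and to 0 if n ≠ 0. Hence the piecewise definition j_n(0) = 1 for n = 0 and j_n(0) = 0 for n ≠ 0 makes j_n continuous at 0. -/
/-!
Poisson's integral `j_n(x) = x ^ n / (2 ^ (n + 1) * n !) * ∫ t in -1..1, cos (x t) (1 - t²) ^ n`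
holds for every `x ≠ 0`: integrating by parts twice, the boundary terms at `t = ±1` vanish as soon
as the exponent is at least `2`, and what is left is the three-term recurrence of `j_n`. The
right-hand side is continuous in `x`, also at `0`, where the factor `x ^ n` kills it unless `n = 0`;
for `n = 0` its value there is half the length of `[-1, 1]`.
-/

open MeasureTheory
open scoped Nat

theorem sq_mul_integral_cos_mul {a b : ℝ} {u u' u'' : ℝ → ℝ}
    (hu : ∀ t ∈ Set.uIcc a b, HasDerivAt u (u' t) t)
    (hu' : ∀ t ∈ Set.uIcc a b, HasDerivAt u' (u'' t) t)
    (hu'' : IntervalIntegrable u'' volume a b) (x : ℝ) :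
    x ^ 2 * ∫ t in a..b, Real.cos (x * t) * u t =
      (x * Real.sin (x * b) * u b + Real.cos (x * b) * u' b) -
        (x * Real.sin (x * a) * u a + Real.cos (x * a) * u' a) -
        ∫ t in a..b, Real.cos (x * t) * u'' t := by
  have hcos : Continuous fun t ↦ Real.cos (x * t) := by fun_prop
  have hint : IntervalIntegrable (fun t ↦ x ^ 2 * (Real.cos (x * t) * u t)) volume a b :=
    (continuousOn_const.mul (hcos.continuousOn.mul (HasDerivAt.continuousOn hu))).intervalIntegrable
  have hint'' : IntervalIntegrable (fun t ↦ Real.cos (x * t) * u'' t) volume a b :=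
    hu''.continuousOn_mul hcos.continuousOn
  have hderiv : ∀ t ∈ Set.uIcc a b,
      HasDerivAt (fun t ↦ x * Real.sin (x * t) * u t + Real.cos (x * t) * u' t)
        (x ^ 2 * (Real.cos (x * t) * u t) + Real.cos (x * t) * u'' t) t := by
    intro t ht
    have hlin : HasDerivAt (fun t ↦ x * t) x t := by simpa using (hasDerivAt_id t).const_mul x
    exact (((hlin.sin.const_mul x).mul (hu t ht)).add (hlin.cos.mul (hu' t ht))).congr_deriv
      (by ring)
  rw [← intervalIntegral.integral_eq_sub_of_hasDerivAt hderiv (hint.add hint''),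
    intervalIntegral.integral_add hint hint'', intervalIntegral.integral_const_mul,
    add_sub_cancel_right]

theorem hasDerivAt_one_sub_sq_pow {𝕜 : Type*} [NontriviallyNormedField 𝕜] (n : ℕ) (t : 𝕜) :
    HasDerivAt (fun t : 𝕜 ↦ (1 - t ^ 2) ^ (n + 1)) (-2 * (n + 1) * t * (1 - t ^ 2) ^ n) t := by
  refine (((hasDerivAt_pow 2 t).const_sub 1).fun_pow (n + 1)).congr_deriv ?_
  push_cast
  ring

/-- The Poisson integral `∫ t in -1..1, cos (x t) (1 - t²) ^ n`, which represents `j_n (x)` up to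
the factor `x ^ n / (2 ^ (n + 1) * n !)`; that factor is left out so that the recurrence in `n` has
polynomial coefficients. -/
noncomputable def besselPoissonIntegral (n : ℕ) (x : ℝ) : ℝ :=
  ∫ t in (-1)..1, Real.cos (x * t) * (1 - t ^ 2) ^ n

theorem continuous_besselPoissonIntegral (n : ℕ) : Continuous (besselPoissonIntegral n) :=
  intervalIntegral.continuous_parametric_intervalIntegral_of_continuous' (by fun_prop) _ _

theorem besselPoissonIntegral_zero_zero : besselPoissonIntegral 0 0 = 2 := by
  norm_num [besselPoissonIntegral]

theorem mul_besselPoissonIntegral_zero (x : ℝ) :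
    x * besselPoissonIntegral 0 x = 2 * Real.sin x := by
  simp only [besselPoissonIntegral, pow_zero, mul_one, intervalIntegral.mul_integral_comp_mul_left,
    integral_cos, mul_neg, Real.sin_neg]
  ring

theorem sq_mul_besselPoissonIntegral_one (x : ℝ) :
    x ^ 2 * besselPoissonIntegral 1 x = 2 * besselPoissonIntegral 0 x - 4 * Real.cos x := by
  have hu' (t : ℝ) : HasDerivAt (fun t : ℝ ↦ -2 * t) (-2) t := by
    simpa using (hasDerivAt_id t).const_mul (-2)
  have hparts := sq_mul_integral_cos_mul (a := -1) (b := 1) (u := fun t ↦ (1 - t ^ 2) ^ 1)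
    (fun t _ ↦ by simpa using hasDerivAt_one_sub_sq_pow 0 t) (fun t _ ↦ hu' t)
    intervalIntegrable_const x
  rw [besselPoissonIntegral, hparts, intervalIntegral.integral_mul_const]
  simp only [besselPoissonIntegral, one_pow, neg_one_sq, sub_self, pow_zero, pow_one, mul_one,
    mul_neg, Real.cos_neg]
  ring

theorem sq_mul_besselPoissonIntegral_add_two (n : ℕ) (x : ℝ) :
    x ^ 2 * besselPoissonIntegral (n + 2) x =
      2 * (n + 2) * (2 * n + 3) * besselPoissonIntegral (n + 1) x -
        4 * (n + 2) * (n + 1) * besselPoissonIntegral n x := by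
  have hu (t : ℝ) : HasDerivAt (fun t : ℝ ↦ (1 - t ^ 2) ^ (n + 2))
      (-2 * (n + 2) * t * (1 - t ^ 2) ^ (n + 1)) t := by
    refine (hasDerivAt_one_sub_sq_pow (n + 1) t).congr_deriv ?_
    push_cast
    ring
  have hu' (t : ℝ) : HasDerivAt (fun t : ℝ ↦ -2 * (n + 2) * t * (1 - t ^ 2) ^ (n + 1))
      (4 * (n + 2) * (n + 1) * (1 - t ^ 2) ^ n -
        2 * (n + 2) * (2 * n + 3) * (1 - t ^ 2) ^ (n + 1)) t := by
    refine (((hasDerivAt_id' t).const_mul (-2 * (n + 2 : ℝ))).mul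
      (hasDerivAt_one_sub_sq_pow n t)).congr_deriv ?_
    ring
  have hint (m : ℕ) (c : ℝ) : IntervalIntegrable
      (fun t ↦ c * (Real.cos (x * t) * (1 - t ^ 2) ^ m)) volume (-1) 1 :=
    Continuous.intervalIntegrable (by fun_prop) _ _
  have hparts := sq_mul_integral_cos_mul (a := -1) (b := 1) (fun t _ ↦ hu t) (fun t _ ↦ hu' t)
    (Continuous.intervalIntegrable (by fun_prop) _ _) x
  rw [besselPoissonIntegral, hparts]
  simp only [mul_sub, mul_left_comm (Real.cos _)]
  rw [intervalIntegral.integral_sub (hint _ _) (hint _ _), intervalIntegral.integral_const_mul,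
    intervalIntegral.integral_const_mul]
  simp [besselPoissonIntegral]

theorem J_eq_besselPoissonIntegral {x : ℝ} (hx : x ≠ 0) (n : ℕ) :
    J n x = x ^ n / (2 ^ (n + 1) * n !) * besselPoissonIntegral n x := by
  induction n using Nat.twoStepInduction with
  | zero =>
    have hsin := mul_besselPoissonIntegral_zero x
    simp only [J, pow_zero, zero_add, pow_one, Nat.factorial_zero, Nat.cast_one]
    field_simp
    linarith
  | one =>
    have hsin := mul_besselPoissonIntegral_zero x
    have hcos := sq_mul_besselPoissonIntegral_one x
    simp only [J, pow_one, Nat.factorial_one, Nat.cast_one]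
    field_simp
    linear_combination -2 * hsin - x * hcos
  | more n ih ih' =>
    calc J (n + 2) x
        = (2 * (n + 1) + 1) / x * J (n + 1) x - J n x := by rw [J]
      _ = x ^ n / (2 ^ (n + 3) * (n + 2)!) *
            (2 * (n + 2) * (2 * n + 3) * besselPoissonIntegral (n + 1) x -
              4 * (n + 2) * (n + 1) * besselPoissonIntegral n x) := by
          rw [ih, ih', Nat.factorial_succ (n + 1), Nat.factorial_succ n]
          push_cast
          field_simp
          ring
      _ = x ^ (n + 2) / (2 ^ (n + 3) * (n + 2)!) * besselPoissonIntegral (n + 2) x := by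
          rw [← sq_mul_besselPoissonIntegral_add_two]
          ring

/-- As `x → 0` along nonzero real values, `j_n(x)` tends to `1` if `n = 0` and to
`0` otherwise; hence setting `j₀(0) = 1` and `j_n(0) = 0` for `n ≠ 0` makes `j_n`
continuous at `0`. -/
theorem J_tendsto_at_zero (n : ℕ) :
    Filter.Tendsto (J n) (nhdsWithin 0 {(0 : ℝ)}ᶜ)
      (nhds (if n = 0 then (1 : ℝ) else 0)) := by
  have hcont : Continuous fun x : ℝ ↦ x ^ n / (2 ^ (n + 1) * n !) * besselPoissonIntegral n x :=
    ((continuous_pow n).div_const _).mul (continuous_besselPoissonIntegral n)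
  have hzero : (0 : ℝ) ^ n / (2 ^ (n + 1) * n !) * besselPoissonIntegral n 0 =
      if n = 0 then 1 else 0 := by
    rcases eq_or_ne n 0 with rfl | hn
    · simp [besselPoissonIntegral_zero_zero]
    · simp [hn]
  rw [← hzero]
  refine (hcont.tendsto 0).mono_left nhdsWithin_le_nhds |>.congr' ?_
  filter_upwards [self_mem_nhdsWithin] with x hx using (J_eq_besselPoissonIntegral hx n).symm
end

section
/- There exists a unique positive real number x such that sin x = x/2, and this unique positive solution lies in the open interval (π/2, 2). -/
/-!
A positive solution of `sin x = x / c` with `π / 2 < c` exceeds `π / 2`, because by Jordan's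
inequality the graph of `sin` lies on or above the chord of slope `2 / π > 1 / c` on `[0, π / 2]`.
It is at most `c` since `sin x ≤ 1`, and if `c ≤ 2π` it is below `π` since `sin x` is positive
there. On `[π / 2, π]` the function `sin x - x / c` is strictly decreasing and changes sign, so it
has exactly one zero.
-/

open Real Set

theorem strictAntiOn_sin_Icc_pi_div_two : StrictAntiOn sin (Icc (π / 2) (π + π / 2)) := by
  intro x hx y hy hxy
  rw [← cos_sub_pi_div_two x, ← cos_sub_pi_div_two y]
  exact strictAntiOn_cos ⟨by linarith [hx.1], by linarith [hx.2]⟩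
    ⟨by linarith [hy.1], by linarith [hy.2]⟩ (by linarith)

theorem sin_lt_one_of_pi_div_two_lt {x : ℝ} (hx : π / 2 < x) (hx' : x ≤ π + π / 2) :
    sin x < 1 := by
  rw [← sin_pi_div_two]
  exact strictAntiOn_sin_Icc_pi_div_two ⟨le_rfl, by linarith [pi_pos]⟩ ⟨hx.le, hx'⟩ hx

theorem lt_pi_of_sin_pos {x : ℝ} (hx : x ≤ 2 * π) (hsin : 0 < sin x) : x < π := by
  by_contra! hpi
  have : sin (x - 2 * π) ≤ 0 :=
    sin_nonpos_of_nonpos_of_neg_pi_le (by linarith) (by linarith)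
  rw [sin_sub_two_pi] at this
  exact this.not_gt hsin

section SinEqDiv

variable {c x : ℝ}

theorem pi_div_two_lt_of_sin_eq_div (hc : π / 2 < c) (hx : 0 < x) (h : sin x = x / c) :
    π / 2 < x := by
  by_contra! hle
  have jordan : x / (π / 2) ≤ sin x := by
    rw [div_eq_inv_mul, inv_div]
    exact mul_le_sin hx.le hle
  have slope_lt : x / c < x / (π / 2) := div_lt_div_of_pos_left hx pi_div_two_pos hc
  exact (slope_lt.trans_le jordan).ne' h

theorem le_of_sin_eq_div (hc : 0 < c) (h : sin x = x / c) : x ≤ c :=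
  (div_le_one hc).mp (h ▸ sin_le_one x)

theorem lt_pi_of_sin_eq_div (hc : 0 < c) (hc' : c ≤ 2 * π) (hx : 0 < x) (h : sin x = x / c) :
    x < π :=
  lt_pi_of_sin_pos ((le_of_sin_eq_div hc h).trans hc') (h ▸ div_pos hx hc)

theorem mem_Ioo_of_sin_eq_div (hc : π / 2 < c) (hc' : c ≤ 2 * π) (hx : 0 < x)
    (h : sin x = x / c) : x ∈ Ioo (π / 2) c := by
  have hc₀ : 0 < c := pi_div_two_pos.trans hc
  have hlow : π / 2 < x := pi_div_two_lt_of_sin_eq_div hc hx h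
  have hpi : x < π := lt_pi_of_sin_eq_div hc₀ hc' hx h
  have hsin : sin x < 1 := sin_lt_one_of_pi_div_two_lt hlow (by linarith [pi_pos])
  exact ⟨hlow, (div_lt_one hc₀).mp (h ▸ hsin)⟩

theorem strictAntiOn_sin_sub_div (hc : 0 < c) :
    StrictAntiOn (fun x ↦ sin x - x / c) (Icc (π / 2) (π + π / 2)) := fun _ hx _ hy hxy ↦
  sub_lt_sub (strictAntiOn_sin_Icc_pi_div_two hx hy hxy) (div_lt_div_of_pos_right hxy hc)

theorem exists_mem_Icc_sin_eq_div (hc : π / 2 ≤ c) : ∃ x ∈ Icc (π / 2) π, sin x = x / c := by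
  have hc₀ : 0 < c := pi_div_two_pos.trans_le hc
  have hle : π / 2 ≤ π := half_le_self pi_pos.le
  refine isPreconnected_Icc.intermediate_value₂ (right_mem_Icc.mpr hle) (left_mem_Icc.mpr hle)
    (by fun_prop) (by fun_prop) ?_ ?_
  · exact sin_pi.trans_le (div_pos pi_pos hc₀).le
  · exact ((div_le_one hc₀).mpr hc).trans_eq sin_pi_div_two.symm

theorem existsUnique_pos_sin_eq_div (hc : π / 2 < c) (hc' : c ≤ 2 * π) :
    ∃! x : ℝ, 0 < x ∧ sin x = x / c := by
  have hc₀ : 0 < c := pi_div_two_pos.trans hc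
  have mem_Icc {z : ℝ} (hz : 0 < z ∧ sin z = z / c) : z ∈ Icc (π / 2) (π + π / 2) :=
    ⟨(pi_div_two_lt_of_sin_eq_div hc hz.1 hz.2).le,
      by linarith [lt_pi_of_sin_eq_div hc₀ hc' hz.1 hz.2, pi_pos]⟩
  refine existsUnique_of_exists_of_unique ?_ fun x y hx hy ↦ ?_
  · obtain ⟨x, hx, h⟩ := exists_mem_Icc_sin_eq_div hc.le
    exact ⟨x, pi_div_two_pos.trans_le hx.1, h⟩
  · refine (strictAntiOn_sin_sub_div hc₀).injOn (mem_Icc hx) (mem_Icc hy) ?_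
    exact (sub_eq_zero.mpr hx.2).trans (sub_eq_zero.mpr hy.2).symm

theorem sin_eq_half_x_unique_pos_general (hc : π / 2 < c) (hc' : c ≤ 2 * π) :
    (∃! x : ℝ, 0 < x ∧ sin x = x / c) ∧
    ∀ x : ℝ, 0 < x → sin x = x / c → x ∈ Ioo (π / 2) c :=
  ⟨existsUnique_pos_sin_eq_div hc hc', fun _ ↦ mem_Ioo_of_sin_eq_div hc hc'⟩

end SinEqDiv

/-- There exists a unique positive real `x` with `sin x = x/2`, and this unique
positive solution lies in the open interval `(π/2, 2)` (OEIS A199460). -/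
theorem sin_eq_half_x_unique_pos :
    (∃! x : ℝ, 0 < x ∧ Real.sin x = x / 2) ∧
    ∀ x : ℝ, 0 < x → Real.sin x = x / 2 → x ∈ Set.Ioo (Real.pi / 2) 2 :=
  sin_eq_half_x_unique_pos_general (by linarith [pi_lt_four]) (by linarith [pi_gt_three])
end

section
/- For every real constant c with c ≥ 1 there exists a unique real number x such that cos x = c · x, and this unique solution lies in the half-open interval (0, 1/c]. -/
/-!
A solution of `cos x = c * x` with `c > 0` satisfies `|x| ≤ 1 / c`. If `2 / π ≤ c`, this puts `x` in
`[-π / 2, π / 2]`, where the cosine is nonnegative, so `x > 0` as well. On `[0, π]` the function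
`cos x - c * x` is strictly decreasing, hence has at most one zero; it is positive at `0` and
nonpositive at `1 / c`, hence has one in `(0, 1 / c]`.
-/

open Real Set

section CosEqMul

variable {c x : ℝ}

theorem abs_le_one_div_of_cos_eq_mul (hc : 0 < c) (h : cos x = c * x) : |x| ≤ 1 / c := by
  rw [le_div_iff₀' hc]
  calc c * |x| = |cos x| := by rw [h, abs_mul, abs_of_pos hc]
    _ ≤ 1 := abs_cos_le_one x

theorem pos_of_cos_eq_mul (hc : 0 < c) (hx : |x| ≤ π / 2) (h : cos x = c * x) : 0 < x := by
  have hcos : 0 ≤ c * x := h ▸ cos_nonneg_of_mem_Icc (abs_le.1 hx)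
  refine (nonneg_of_mul_nonneg_right hcos hc).lt_of_ne ?_
  rintro rfl
  simp at h

theorem one_div_le_pi_div_two (hc : 2 / π ≤ c) : 1 / c ≤ π / 2 := by
  simpa only [one_div_div] using one_div_le_one_div_of_le (div_pos two_pos pi_pos) hc

theorem mem_Ioc_of_cos_eq_mul (hc : 2 / π ≤ c) (h : cos x = c * x) : x ∈ Ioc 0 (1 / c) := by
  have hc₀ : 0 < c := (div_pos two_pos pi_pos).trans_le hc
  have hx : |x| ≤ 1 / c := abs_le_one_div_of_cos_eq_mul hc₀ h
  exact ⟨pos_of_cos_eq_mul hc₀ (hx.trans (one_div_le_pi_div_two hc)) h, (le_abs_self x).trans hx⟩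

theorem exists_mem_Icc_cos_eq_mul (hc : 0 < c) : ∃ x ∈ Icc 0 (1 / c), cos x = c * x := by
  refine isPreconnected_Icc.intermediate_value₂ (right_mem_Icc.2 (one_div_pos.2 hc).le)
    (left_mem_Icc.2 (one_div_pos.2 hc).le) (by fun_prop) (by fun_prop) ?_ ?_
  · simpa only [mul_one_div_cancel hc.ne'] using cos_le_one (1 / c)
  · simp only [mul_zero, cos_zero, zero_le_one]

theorem strictAntiOn_cos_sub_mul (hc : 0 ≤ c) :
    StrictAntiOn (fun x ↦ cos x - c * x) (Icc 0 π) := by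
  intro x hx y hy hxy
  have hcos : cos y < cos x := strictAntiOn_cos hx hy hxy
  have hmul : c * x ≤ c * y := mul_le_mul_of_nonneg_left hxy.le hc
  linarith

theorem eq_of_cos_eq_mul {y : ℝ} (hc : 0 ≤ c) (hx : x ∈ Icc 0 π) (hy : y ∈ Icc 0 π)
    (hcx : cos x = c * x) (hcy : cos y = c * y) : x = y :=
  (strictAntiOn_cos_sub_mul hc).injOn hx hy <|
    (sub_eq_zero.2 hcx).trans (sub_eq_zero.2 hcy).symm

end CosEqMul

theorem generalized_dottie_unique_general (c : ℝ) (hc : 2 / π ≤ c) :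
    (∃! x : ℝ, cos x = c * x) ∧ ∀ x : ℝ, cos x = c * x → x ∈ Ioc 0 (1 / c) := by
  have hc₀ : 0 < c := (div_pos two_pos pi_pos).trans_le hc
  have hcπ : 1 / c ≤ π := (one_div_le_pi_div_two hc).trans (half_le_self pi_pos.le)
  have mem_Icc {x : ℝ} (h : cos x = c * x) : x ∈ Icc 0 π :=
    Icc_subset_Icc_right hcπ (Ioc_subset_Icc_self (mem_Ioc_of_cos_eq_mul hc h))
  obtain ⟨x, -, hx⟩ := exists_mem_Icc_cos_eq_mul hc₀
  exact ⟨⟨x, hx, fun y hy ↦ eq_of_cos_eq_mul hc₀.le (mem_Icc hy) (mem_Icc hx) hy hx⟩,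
    fun _ ↦ mem_Ioc_of_cos_eq_mul hc⟩

/-- For every real `c ≥ 1` there exists a unique real `x` such that
`cos x = c·x` (the generalized Dottie equation), and this unique solution lies
in the half-open interval `(0, 1/c]`. -/
theorem generalized_dottie_unique (c : ℝ) (hc : 1 ≤ c) :
    (∃! x : ℝ, Real.cos x = c * x) ∧
    ∀ x : ℝ, Real.cos x = c * x → x ∈ Set.Ioc 0 (1 / c) :=
  generalized_dottie_unique_general c (((div_le_one pi_pos).2 two_le_pi).trans hc)
end

section
/- Define g : ℝ → ℝ by g x = cosh x / x - sinh x / x² for x ≠ 0 and g 0 = 0 (the modified spherical Bessel function i₁ extended continuously to 0). Then g is strictly monotone increasing on ℝ and surjective onto ℝ; consequently, for every real constant c₀ the equation cosh x / x - sinh x / x² = c₀ (together with the value 0 at x = 0) has exactly one real solution. -/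
open Real

/-- The modified spherical Bessel function `i₁` extended continuously to `0`. -/
noncomputable def g : ℝ → ℝ :=
  fun x => if x = 0 then 0 else Real.cosh x / x - Real.sinh x / x ^ 2

/-!
The function `i₁` has the integral representation `i₁(x) = ∫₀¹ t sinh(xt) dt`, valid also at
`x = 0`. For each fixed `t > 0` the integrand is strictly increasing in `x`, hence so is the
integral. It is also continuous and odd in `x`, and at least `∫₀¹ t (xt) dt = x/3` for `x ≥ 0`,
hence unbounded in both directions.
-/

open Set Filter MeasureTheory

theorem strictMono_intervalIntegral {α : Type*} [Preorder α] {F : α → ℝ → ℝ} {a b : ℝ}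
    (hab : a < b) (hint : ∀ x, IntervalIntegrable (F x) volume a b)
    (hmono : ∀ t ∈ Ioo a b, StrictMono fun x => F x t) :
    StrictMono fun x => ∫ t in a..b, F x t := by
  intro x y hxy
  rw [← sub_pos, ← intervalIntegral.integral_sub (hint y) (hint x)]
  exact intervalIntegral.intervalIntegral_pos_of_pos_on ((hint y).sub (hint x))
    (fun t ht => sub_pos.2 (hmono t ht hxy)) hab

theorem tendsto_atBot_atBot_of_odd {α β : Type*}
    [AddCommGroup α] [PartialOrder α] [IsOrderedAddMonoid α]
    [AddCommGroup β] [PartialOrder β] [IsOrderedAddMonoid β] {f : α → β}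
    (hodd : f.Odd) (htop : Tendsto f atTop atTop) : Tendsto f atBot atBot := by
  have hneg : Tendsto (fun x => -f (-x)) atBot atBot :=
    tendsto_neg_atTop_atBot.comp (htop.comp tendsto_neg_atBot_atTop)
  simpa only [hodd _, neg_neg] using hneg

theorem integral_mul_sinh_mul {c : ℝ} (hc : c ≠ 0) (a b : ℝ) :
    ∫ t in a..b, t * sinh (c * t) =
      (b * cosh (c * b) / c - sinh (c * b) / c ^ 2) -
        (a * cosh (c * a) / c - sinh (c * a) / c ^ 2) := by
  refine intervalIntegral.integral_eq_sub_of_hasDerivAt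
    (f := fun t => t * cosh (c * t) / c - sinh (c * t) / c ^ 2) (fun t _ => ?_)
    (Continuous.intervalIntegrable (by fun_prop) a b)
  have hlin : HasDerivAt (fun s => c * s) c t := by
    simpa using (hasDerivAt_id t).const_mul c
  have hderiv := (((hasDerivAt_id' t).mul hlin.cosh).div_const c).sub (hlin.sinh.div_const (c ^ 2))
  refine hderiv.congr_deriv ?_
  field_simp
  ring

theorem g_eq_integral (x : ℝ) : g x = ∫ t in (0 : ℝ)..1, t * sinh (x * t) := by
  rcases eq_or_ne x 0 with rfl | hx
  · simp [g]
  · simp [g, hx, integral_mul_sinh_mul hx]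

theorem strictMono_g : StrictMono g := by
  simp only [funext g_eq_integral]
  refine strictMono_intervalIntegral one_pos
    (fun x => Continuous.intervalIntegrable (by fun_prop) 0 1) fun t ht x y hxy => ?_
  exact mul_lt_mul_of_pos_left (sinh_strictMono (mul_lt_mul_of_pos_right hxy ht.1)) ht.1

theorem continuous_g : Continuous g := by
  simp only [funext g_eq_integral]
  fun_prop

theorem odd_g : g.Odd := fun x => by
  simp only [g_eq_integral, neg_mul, sinh_neg, mul_neg, intervalIntegral.integral_neg]

theorem div_three_le_g {x : ℝ} (hx : 0 ≤ x) : x / 3 ≤ g x :=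
  calc x / 3 = ∫ t in (0 : ℝ)..1, x * t ^ 2 := by
        rw [intervalIntegral.integral_const_mul, integral_pow]
        ring
    _ ≤ ∫ t in (0 : ℝ)..1, t * sinh (x * t) := by
        refine intervalIntegral.integral_mono_on zero_le_one
          (Continuous.intervalIntegrable (by fun_prop) 0 1)
          (Continuous.intervalIntegrable (by fun_prop) 0 1) fun t ht => ?_
        calc x * t ^ 2 = t * (x * t) := by ring
          _ ≤ t * sinh (x * t) :=
            mul_le_mul_of_nonneg_left (self_le_sinh_iff.2 (mul_nonneg hx ht.1)) ht.1
    _ = g x := (g_eq_integral x).symm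

theorem tendsto_g_atTop : Tendsto g atTop atTop :=
  tendsto_atTop_mono' atTop
    ((eventually_ge_atTop 0).mono fun _ hx => div_three_le_g hx)
    (tendsto_id.atTop_div_const three_pos)

theorem surjective_g : Function.Surjective g :=
  continuous_g.surjective tendsto_g_atTop (tendsto_atBot_atBot_of_odd odd_g tendsto_g_atTop)

/-- `g` (the modified spherical Bessel function `i₁`, extended by `g 0 = 0`) is
strictly monotone increasing on `ℝ` and surjective onto `ℝ`; consequently for
every real `c₀` the equation `i₁(x) = c₀` has exactly one real solution. -/
theorem i1_strictMono_surjective_unique_solution :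
    StrictMono g ∧ Function.Surjective g ∧ ∀ c₀ : ℝ, ∃! x : ℝ, g x = c₀ :=
  ⟨strictMono_g, surjective_g,
    (Function.bijective_iff_existsUnique g).1 ⟨strictMono_g.injective, surjective_g⟩⟩
end
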